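/- Let a, P1, P2 be real numbers with P1 ≥ 0, P2 ≥ 0, 1 ≤ a^2, a^2 ≤ P2 + 1 and P2 + 1 ≤ a^2 * P1. Then C( P1*P2 + P1*(1 + 2*a^2) + 2*P2 ) − [ C(a^2*P1) + C( P2 / (2*a^2) ) − 1/2 ] ≤ C(9). -/

import Mathlib

/-- Gaussian capacity function: C(x) = (1/2) * log₂(1 + x). -/
noncomputable def C (x : ℝ) : ℝ := (1/2) * Real.logb 2 (1 + x)

/-!
Since `C` turns products of the quantities `1 + x` into sums and `1/2 = C 1`, a gap of at most `C 7`
means `2 * (1 + U) ≤ 8 * ((1 + a² P1) * (1 + P2 / (2 a²)))`, where `U` is the argument of the upper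
bound. After expansion only `P1 + 2 P2` remains to be absorbed, into `3 + 2 a² P1 + P1 P2`. For
`P2 ≤ 1` the terms `P1` and `2 P2` go into `2 a² P1` and `3`; for `P2 ≥ 1` they go into `P1 P2` and
`2 a² P1`.
-/

theorem C_one : C 1 = 1 / 2 := by
  norm_num [C]

theorem C_le_C {x y : ℝ} (hx : -1 < x) (hxy : x ≤ y) : C x ≤ C y := by
  have hlog : Real.logb 2 (1 + x) ≤ Real.logb 2 (1 + y) :=
    Real.logb_le_logb_of_le one_lt_two (by linarith) (by linarith)
  unfold C
  linarith

theorem C_add_C {x y : ℝ} (hx : -1 < x) (hy : -1 < y) : C x + C y = C (x + y + x * y) := by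
  have hfactor : 1 + (x + y + x * y) = (1 + x) * (1 + y) := by ring
  unfold C
  rw [hfactor, Real.logb_mul (by linarith) (by linarith), mul_add]

theorem add_two_mul_le_three_add {g p q : ℝ} (hg : 1 / 2 ≤ g) (hp : 0 ≤ p) (hq : 0 ≤ q)
    (h : q + 1 ≤ g * p) : p + 2 * q ≤ 3 + 2 * (g * p) + p * q := by
  rcases le_total q 1 with hq1 | hq1
  · have hp_le : p ≤ 2 * g * p := le_mul_of_one_le_left hp (by linarith)
    have hpq : 0 ≤ p * q := mul_nonneg hp hq
    linarith
  · have hp_le : p ≤ p * q := le_mul_of_one_le_right hp hq1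
    linarith

theorem one_add_le_four_mul {g p q : ℝ} (hg : 1 / 2 ≤ g) (hq : 0 ≤ q) (h : q + 1 ≤ g * p) :
    1 + (p * q + p * (1 + 2 * g) + 2 * q) ≤ 4 * ((1 + g * p) * (1 + q / (2 * g))) := by
  have hg_pos : 0 < g := by linarith
  have hp : 0 ≤ p := nonneg_of_mul_nonneg_right (by linarith : 0 ≤ g * p) hg_pos
  have hquot : 0 ≤ q / (2 * g) := by positivity
  calc 1 + (p * q + p * (1 + 2 * g) + 2 * q)
      = 1 + p * q + 2 * (g * p) + (p + 2 * q) := by ring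
    _ ≤ 1 + p * q + 2 * (g * p) + (3 + 2 * (g * p) + p * q) := by
        linarith [add_two_mul_le_three_add hg hp hq h]
    _ ≤ 4 + 4 * (g * p) + 2 * (p * q) + 4 * (q / (2 * g)) := by linarith
    _ = 4 * ((1 + g * p) * (1 + q / (2 * g))) := by
        field_simp
        ring

theorem stmt_18_general {a P1 P2 : ℝ} (hP2 : 0 ≤ P2) (ha : 1 / 2 ≤ a ^ 2)
    (h : P2 + 1 ≤ a ^ 2 * P1) :
    C (P1 * P2 + P1 * (1 + 2 * a ^ 2) + 2 * P2) -
      (C (a ^ 2 * P1) + C (P2 / (2 * a ^ 2)) - 1 / 2) ≤ C 7 := by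
  have ha_pos : 0 < a ^ 2 := by linarith
  have hP1 : 0 ≤ P1 := nonneg_of_mul_nonneg_right (by linarith : 0 ≤ a ^ 2 * P1) ha_pos
  set U := P1 * P2 + P1 * (1 + 2 * a ^ 2) + 2 * P2
  set A := a ^ 2 * P1
  set B := P2 / (2 * a ^ 2)
  have hU : 0 ≤ U := by positivity
  have hA : 0 ≤ A := by positivity
  have hB : 0 ≤ B := by positivity
  have hAB : 0 ≤ A + B + A * B := by positivity
  have hbound : 1 + U ≤ 4 * ((1 + A) * (1 + B)) := one_add_le_four_mul ha hP2 h
  have hsum : C U + C 1 ≤ C 7 + (C A + C B) := by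
    rw [C_add_C (neg_one_lt_zero.trans_le hU) (by norm_num),
      C_add_C (neg_one_lt_zero.trans_le hA) (neg_one_lt_zero.trans_le hB),
      C_add_C (by norm_num) (neg_one_lt_zero.trans_le hAB)]
    exact C_le_C (by linarith) (by linarith)
  linarith [C_one]

theorem stmt_18 (a P1 P2 : ℝ) (hP1 : 0 ≤ P1) (hP2 : 0 ≤ P2)
    (ha1 : 1 ≤ a ^ 2) (ha2 : a ^ 2 ≤ P2 + 1) (h : P2 + 1 ≤ a ^ 2 * P1) :
    C (P1 * P2 + P1 * (1 + 2 * a ^ 2) + 2 * P2) -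
      (C (a ^ 2 * P1) + C (P2 / (2 * a ^ 2)) - 1 / 2) ≤ C 9 :=
  (stmt_18_general hP2 (by linarith) h).trans (C_le_C (by norm_num) (by norm_num))
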